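/- arXiv:2402.04468 — 2 statements merged into one kernel-verified Lean document; each statement's English description precedes it below -/
import Mathlib

section
/- Let V be a finite-dimensional unital associative algebra over a field k of characteristic zero such that the trace form g(x,y) := tr(L_{x*y}) is nondegenerate. Then the composite linear map Z(V) → V → V/[V,V], given by including the center into V and then projecting to the quotient by the span of commutators, is a linear isomorphism. (In particular the zeroth Hochschild homology V/[V,V] is isomorphic to the center Z(V).) -/
/-!
The trace form `g(x, y) = tr L_{xy}` is symmetric and associative, so when it is nondegenerate the
orthogonal complement of `[V,V]` is `Z(V)`. A subspace meeting its orthogonal complement trivially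
is complementary to it, so it is enough to show `Z(V) ∩ [V,V] = 0`. The functional
`c ↦ tr(L_a R_c)` kills commutators, because left multiplications commute with right
multiplications and the trace is cyclic. For `z ∈ Z(V) ∩ [V,V]` we have `R_z = L_z`, hence
`g(y, z) = tr(L_y R_z) = 0` for every `y`, and `z = 0`.
-/

section CommutatorSpan

variable (R A : Type*) [CommRing R] [Ring A] [Algebra R A]

/-- The commutator subspace `[A,A]`: the linear span of the commutators, not the ideal they
generate. -/
def commutatorSpan : Submodule R A := Submodule.span R {c : A | ∃ x y : A, c = x * y - y * x}

variable {R A}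

lemma commutatorSpan_le_ker_iff {M : Type*} [AddCommGroup M] [Module R M] (f : A →ₗ[R] M) :
    commutatorSpan R A ≤ LinearMap.ker f ↔ ∀ x y, f (x * y) = f (y * x) := by
  rw [commutatorSpan, Submodule.span_le]
  constructor
  · intro h x y
    rw [← sub_eq_zero, ← map_sub]
    exact h ⟨x, y, rfl⟩
  · rintro h _ ⟨x, y, rfl⟩
    rw [SetLike.mem_coe, LinearMap.mem_ker, map_sub, h, sub_self]

lemma trace_mulLeft_mul_mulRight_mul_comm (a x y : A) :
    LinearMap.trace R A (LinearMap.mulLeft R a * LinearMap.mulRight R (x * y)) =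
      LinearMap.trace R A (LinearMap.mulLeft R a * LinearMap.mulRight R (y * x)) := by
  calc LinearMap.trace R A (LinearMap.mulLeft R a * LinearMap.mulRight R (x * y))
    _ = LinearMap.trace R A
          (LinearMap.mulLeft R a * LinearMap.mulRight R y * LinearMap.mulRight R x) := by
      rw [LinearMap.mulRight_mul, ← Module.End.mul_eq_comp, mul_assoc]
    _ = LinearMap.trace R A
          (LinearMap.mulRight R y * (LinearMap.mulLeft R a * LinearMap.mulRight R x)) := by
      rw [(LinearMap.commute_mulLeft_right a y).eq, mul_assoc]
    _ = LinearMap.trace R A (LinearMap.mulLeft R a * LinearMap.mulRight R (y * x)) := by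
      rw [LinearMap.trace_mul_comm, LinearMap.mulRight_mul, ← Module.End.mul_eq_comp, mul_assoc]

lemma trace_mulLeft_mul_mulRight_eq_zero (a : A) {c : A} (hc : c ∈ commutatorSpan R A) :
    LinearMap.trace R A (LinearMap.mulLeft R a * LinearMap.mulRight R c) = 0 :=
  (commutatorSpan_le_ker_iff (LinearMap.trace R A ∘ₗ
    LinearMap.mulLeft R (LinearMap.mulLeft R a) ∘ₗ (LinearMap.mul R A).flip)).mpr
    (trace_mulLeft_mul_mulRight_mul_comm a) hc

end CommutatorSpan

section RegularTraceForm

variable (R A : Type*) [CommRing R] [Ring A] [Algebra R A]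

/-- The trace form `(x, y) ↦ tr L_{xy}` of the left regular representation of `A`. It
extends `Algebra.traceForm` to noncommutative `A`. -/
noncomputable def regularTraceForm : LinearMap.BilinForm R A :=
  (LinearMap.mul R A).compr₂ (LinearMap.trace R A ∘ₗ LinearMap.mul R A)

variable {R A}

lemma regularTraceForm_apply (x y : A) :
    regularTraceForm R A x y = LinearMap.trace R A (LinearMap.mulLeft R (x * y)) := rfl

lemma regularTraceForm_isSymm : (regularTraceForm R A).IsSymm where
  eq x y := by
    simp only [regularTraceForm_apply, LinearMap.mulLeft_mul]
    exact LinearMap.trace_mul_comm R _ _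

lemma regularTraceForm_mul_left (x y z : A) :
    regularTraceForm R A (x * y) z = regularTraceForm R A x (y * z) := by
  simp only [regularTraceForm_apply, mul_assoc]

lemma orthogonal_commutatorSpan (h : (regularTraceForm R A).SeparatingLeft) :
    (regularTraceForm R A).orthogonal (commutatorSpan R A) =
      (Subalgebra.center R A).toSubmodule := by
  ext z
  calc z ∈ (regularTraceForm R A).orthogonal (commutatorSpan R A)
    _ ↔ commutatorSpan R A ≤ LinearMap.ker ((regularTraceForm R A).flip z) := Iff.rfl
    _ ↔ ∀ x y, regularTraceForm R A (x * y) z = regularTraceForm R A (y * x) z :=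
      commutatorSpan_le_ker_iff _
    _ ↔ ∀ x y, regularTraceForm R A (x * z - z * x) y = 0 := by
      refine forall₂_congr fun x y ↦ ?_
      rw [map_sub, LinearMap.sub_apply, sub_eq_zero, regularTraceForm_mul_left y x z,
        regularTraceForm_isSymm.eq y, regularTraceForm_isSymm.eq (x * y),
        ← regularTraceForm_mul_left z x y, eq_comm]
    _ ↔ ∀ x, x * z = z * x := by
      refine forall_congr' fun x ↦ ⟨fun hx ↦ sub_eq_zero.mp (h _ hx), fun hx y ↦ ?_⟩
      rw [hx, sub_self, map_zero, LinearMap.zero_apply]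
    _ ↔ z ∈ (Subalgebra.center R A).toSubmodule :=
      (Subalgebra.mem_center_iff (R := R)).symm

lemma disjoint_commutatorSpan_center (h : (regularTraceForm R A).SeparatingLeft) :
    Disjoint (commutatorSpan R A) (Subalgebra.center R A).toSubmodule := by
  refine Submodule.disjoint_def.mpr fun z hz hzc ↦ h z fun y ↦ ?_
  have mulRight_eq_mulLeft : LinearMap.mulRight R z = LinearMap.mulLeft R z :=
    LinearMap.ext ((Subalgebra.mem_center_iff (R := R)).mp hzc)
  calc regularTraceForm R A z y
    _ = LinearMap.trace R A (LinearMap.mulLeft R y * LinearMap.mulRight R z) := by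
      rw [regularTraceForm_isSymm.eq, regularTraceForm_apply, LinearMap.mulLeft_mul,
        mulRight_eq_mulLeft, Module.End.mul_eq_comp]
    _ = 0 := trace_mulLeft_mul_mulRight_eq_zero y hz

end RegularTraceForm

lemma isCompl_commutatorSpan_center {k V : Type*} [Field k] [Ring V] [Algebra k V]
    [FiniteDimensional k V] (h : (regularTraceForm k V).SeparatingLeft) :
    IsCompl (commutatorSpan k V) (Subalgebra.center k V).toSubmodule := by
  rw [← orthogonal_commutatorSpan h,
    LinearMap.BilinForm.isCompl_orthogonal_iff_disjoint regularTraceForm_isSymm.isRefl,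
    orthogonal_commutatorSpan h]
  exact disjoint_commutatorSpan_center h

theorem stmt_2_general (k V : Type*) [Field k] [Ring V] [Algebra k V] [FiniteDimensional k V]
    (hnondeg : ∀ x : V,
      (∀ y : V, LinearMap.trace k V (LinearMap.mulLeft k (x * y)) = 0) → x = 0) :
    Function.Bijective
      ((Submodule.span k {c : V | ∃ x y : V, c = x * y - y * x}).mkQ.comp
        (Subalgebra.center k V).toSubmodule.subtype) :=
  (Submodule.quotientEquivOfIsCompl _ _ (isCompl_commutatorSpan_center hnondeg)).symm.bijective

/-- If the trace form of a finite-dimensional unital associative algebra `V` over a field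
of characteristic zero is nondegenerate, then the composite `Z(V) → V → V/[V,V]` of the
inclusion of the center with the quotient projection is a linear isomorphism. -/
theorem stmt_2 (k V : Type*) [Field k] [CharZero k] [Ring V] [Algebra k V]
    [FiniteDimensional k V]
    (hnondeg : ∀ x : V,
      (∀ y : V, LinearMap.trace k V (LinearMap.mulLeft k (x * y)) = 0) → x = 0) :
    Function.Bijective
      ((Submodule.span k {c : V | ∃ x y : V, c = x * y - y * x}).mkQ.comp
        (Subalgebra.center k V).toSubmodule.subtype) :=
  stmt_2_general k V hnondeg
end

section
/- Let V be a finite-dimensional unital associative algebra over a field k of characteristic zero such that the trace form g(x,y) := tr(L_{x*y}) is nondegenerate, and define γ(x,y) := tr of the endomorphism z ↦ x*z*y. Let P : V → V be a linear map satisfying g(x, P(y)) = γ(x,y) for all x, y ∈ V. Then P is a projector, P ∘ P = P, with range equal to the center Z(V) and kernel equal to the linear span of commutators [V,V]. (In field-theory terms: the partition function of the simplest triangulated cylinder is the projection onto the center along the commutator subspace.) -/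
/-!
Cyclicity of the trace and nondegeneracy of `g` show that `P` takes central values, fixes the center
and kills commutators. For the remaining inclusion, let `c i` be the `g`-dual basis of a basis
`b i`. Then `P y = ∑ b i * y * c i`, while `∑ c i * b i = P 1 = 1` because `g` is symmetric, so
`y - P y = ∑ (c i * (b i * y) - (b i * y) * c i)` is a sum of commutators. Unlike a dimension count,
this works over any commutative ring, as soon as `g` is a perfect pairing.
-/

open Module

section DualBasis

variable {R M N ι : Type*} [CommRing R] [AddCommGroup M] [Module R M] [AddCommGroup N] [Module R N]
  [DecidableEq ι]

theorem exists_basis_apply_eq_ite_of_isPerfPair [Finite ι] (B : M →ₗ[R] N →ₗ[R] R) [B.IsPerfPair]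
    (b : Basis ι R N) : ∃ c : Basis ι R M, ∀ i j, B (c i) (b j) = if j = i then 1 else 0 := by
  refine ⟨b.dualBasis.map B.toPerfPair.symm, fun i j => ?_⟩
  rw [Basis.map_apply, LinearMap.apply_symm_toPerfPair_self, Basis.dualBasis_apply_self]

theorem trace_eq_sum_apply_of_dual [Fintype ι] {B : M →ₗ[R] N →ₗ[R] R} {b : Basis ι R N}
    {c : ι → M} (hc : ∀ i j, B (c i) (b j) = if j = i then 1 else 0) (T : N →ₗ[R] N) :
    LinearMap.trace R N T = ∑ i, B (c i) (T (b i)) := by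
  have coord_eq (i : ι) : b.coord i = B (c i) :=
    b.ext fun j => by rw [hc, Basis.coord_apply, Basis.repr_self_apply]
  simp only [LinearMap.trace_eq_matrix_trace R b, Matrix.trace, Matrix.diag_apply,
    LinearMap.toMatrix_apply, ← coord_eq, Basis.coord_apply]

end DualBasis

section Definitions

variable (R A : Type*) [CommRing R] [Ring A] [Algebra R A]

/-- The trace form `g(x, y) = tr L_{x*y}`. Mathlib's `Algebra.traceForm` is available for
commutative algebras only. -/
noncomputable def leftTraceForm : LinearMap.BilinForm R A :=
  (LinearMap.mul R A).compr₂ (LinearMap.trace R A ∘ₗ LinearMap.mul R A)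

/-- The commutator subspace `[A, A]`: the span of all commutators, not the ideal they generate. -/
def commutatorSubmodule : Submodule R A :=
  Submodule.span R {c : A | ∃ a b : A, c = a * b - b * a}

variable {A}

/-- The pairing `γ(x, y)`, the trace of `z ↦ x * z * y`. -/
noncomputable def sandwichTrace (x y : A) : R :=
  LinearMap.trace R A (LinearMap.mulLeft R x ∘ₗ LinearMap.mulRight R y)

variable {R}

/-- `P` represents `γ` with respect to the trace form: `g(x, P y) = γ(x, y)`. Such a `P` is the
partition function of the simplest triangulated cylinder. -/
def IsCylinderOperator (P : A →ₗ[R] A) : Prop :=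
  ∀ x y, leftTraceForm R A x (P y) = sandwichTrace R x y

end Definitions

section TraceForm

variable {R A : Type*} [CommRing R] [Ring A] [Algebra R A]

theorem leftTraceForm_apply (x y : A) :
    leftTraceForm R A x y = LinearMap.trace R A (LinearMap.mulLeft R (x * y)) := rfl

theorem leftTraceForm_comm (x y : A) : leftTraceForm R A x y = leftTraceForm R A y x := by
  simp only [leftTraceForm_apply, LinearMap.mulLeft_mul]
  exact LinearMap.trace_mul_comm R _ _

theorem leftTraceForm_mul_left (x y z : A) :
    leftTraceForm R A (x * y) z = leftTraceForm R A x (y * z) := by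
  simp only [leftTraceForm_apply, mul_assoc]

theorem eq_of_forall_leftTraceForm_eq (hg : Function.Injective (leftTraceForm R A)) {a b : A}
    (h : ∀ x, leftTraceForm R A x a = leftTraceForm R A x b) : a = b :=
  hg <| LinearMap.ext fun x => by rw [leftTraceForm_comm, h, leftTraceForm_comm]

theorem isPerfPair_leftTraceForm_of_separatingLeft {k V : Type*} [Field k] [Ring V] [Algebra k V]
    [FiniteDimensional k V] (h : (leftTraceForm k V).SeparatingLeft) :
    (leftTraceForm k V).IsPerfPair := by
  have hinj : Function.Injective (leftTraceForm k V) :=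
    LinearMap.ker_eq_bot.1 (LinearMap.separatingLeft_iff_ker_eq_bot.1 h)
  have hflip : LinearMap.flip (leftTraceForm k V) = leftTraceForm k V :=
    LinearMap.ext₂ fun x y => leftTraceForm_comm y x
  exact .of_injective hinj (by rwa [hflip])

theorem sandwichTrace_mul_comm_left (a b y : A) :
    sandwichTrace R (a * b) y = sandwichTrace R (b * a) y := by
  simp only [sandwichTrace, LinearMap.mulLeft_mul, ← Module.End.mul_eq_comp]
  rw [mul_assoc, LinearMap.trace_mul_comm, mul_assoc, mul_assoc,
    (LinearMap.commute_mulLeft_right a y).eq]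

theorem sandwichTrace_mul_comm_right (x a b : A) :
    sandwichTrace R x (a * b) = sandwichTrace R x (b * a) := by
  simp only [sandwichTrace, LinearMap.mulRight_mul, ← Module.End.mul_eq_comp]
  rw [← mul_assoc, LinearMap.trace_mul_comm, ← mul_assoc, ← mul_assoc,
    (LinearMap.commute_mulLeft_right x a).eq]

theorem sandwichTrace_eq_leftTraceForm_of_mem_center (x : A) {z : A}
    (hz : z ∈ Subalgebra.center R A) : sandwichTrace R x z = leftTraceForm R A x z := by
  have mulRight_eq : LinearMap.mulRight R z = LinearMap.mulLeft R z :=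
    LinearMap.ext (Subalgebra.mem_center_iff.1 hz)
  rw [sandwichTrace, mulRight_eq, leftTraceForm_apply, LinearMap.mulLeft_mul]

theorem sandwichTrace_eq_leftTraceForm_sum {ι : Type*} [Fintype ι] [DecidableEq ι]
    {b : Basis ι R A} {c : ι → A}
    (hc : ∀ i j, leftTraceForm R A (c i) (b j) = if j = i then 1 else 0) (x y : A) :
    sandwichTrace R x y = leftTraceForm R A x (∑ i, b i * y * c i) := by
  rw [sandwichTrace, trace_eq_sum_apply_of_dual hc, map_sum]
  refine Finset.sum_congr rfl fun i _ => ?_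
  calc leftTraceForm R A (c i) (x * (b i * y))
    _ = leftTraceForm R A (x * (b i * y)) (c i) := leftTraceForm_comm _ _
    _ = leftTraceForm R A x (b i * y * c i) := leftTraceForm_mul_left _ _ _

theorem mul_sub_mul_mem_commutatorSubmodule (a b : A) :
    a * b - b * a ∈ commutatorSubmodule R A :=
  Submodule.subset_span ⟨a, b, rfl⟩

namespace IsCylinderOperator

variable {P : A →ₗ[R] A}

theorem apply_mem_center (hP : IsCylinderOperator P)
    (hg : Function.Injective (leftTraceForm R A)) (y : A) : P y ∈ Subalgebra.center R A := by
  refine Subalgebra.mem_center_iff.2 fun z => eq_of_forall_leftTraceForm_eq hg fun x => ?_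
  calc leftTraceForm R A x (z * P y)
    _ = leftTraceForm R A (x * z) (P y) := (leftTraceForm_mul_left _ _ _).symm
    _ = leftTraceForm R A (z * x) (P y) := by rw [hP, hP, sandwichTrace_mul_comm_left]
    _ = leftTraceForm R A (x * P y) z := by rw [leftTraceForm_mul_left, leftTraceForm_comm]
    _ = leftTraceForm R A x (P y * z) := leftTraceForm_mul_left _ _ _

theorem apply_of_mem_center (hP : IsCylinderOperator P)
    (hg : Function.Injective (leftTraceForm R A)) {z : A} (hz : z ∈ Subalgebra.center R A) :
    P z = z :=
  eq_of_forall_leftTraceForm_eq hg fun x => by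
    rw [hP, sandwichTrace_eq_leftTraceForm_of_mem_center x hz]

theorem isProj_center (hP : IsCylinderOperator P)
    (hg : Function.Injective (leftTraceForm R A)) :
    LinearMap.IsProj (Subalgebra.center R A).toSubmodule P :=
  ⟨hP.apply_mem_center hg, fun _ => hP.apply_of_mem_center hg⟩

theorem commutatorSubmodule_le_ker (hP : IsCylinderOperator P)
    (hg : Function.Injective (leftTraceForm R A)) :
    commutatorSubmodule R A ≤ LinearMap.ker P := by
  refine Submodule.span_le.2 ?_
  rintro _ ⟨a, b, rfl⟩
  have map_mul_comm : P (a * b) = P (b * a) := eq_of_forall_leftTraceForm_eq hg fun x => by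
    rw [hP, hP, sandwichTrace_mul_comm_right]
  exact LinearMap.sub_mem_ker_iff.2 map_mul_comm

theorem apply_eq_sum (hP : IsCylinderOperator P) (hg : Function.Injective (leftTraceForm R A))
    {ι : Type*} [Fintype ι] [DecidableEq ι] {b : Basis ι R A} {c : ι → A}
    (hc : ∀ i j, leftTraceForm R A (c i) (b j) = if j = i then 1 else 0) (y : A) :
    P y = ∑ i, b i * y * c i :=
  eq_of_forall_leftTraceForm_eq hg fun x => by
    rw [hP, sandwichTrace_eq_leftTraceForm_sum hc]

theorem sub_apply_mem_commutatorSubmodule [Module.Free R A] [Module.Finite R A]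
    [(leftTraceForm R A).IsPerfPair] (hP : IsCylinderOperator P) (y : A) :
    y - P y ∈ commutatorSubmodule R A := by
  classical
  have hg := LinearMap.IsPerfPair.bijective_left (leftTraceForm R A) |>.injective
  let b := Module.Free.chooseBasis R A
  obtain ⟨c, hc⟩ := exists_basis_apply_eq_ite_of_isPerfPair (leftTraceForm R A) b
  have hb (i j) : leftTraceForm R A (b i) (c j) = if j = i then 1 else 0 := by
    rw [leftTraceForm_comm, hc]
    simp only [eq_comm]
  have sum_mul_eq_one : ∑ i, c i * b i = 1 := by
    have apply_one := hP.apply_of_mem_center hg (one_mem (Subalgebra.center R A))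
    simpa only [hP.apply_eq_sum hg hb, mul_one] using apply_one
  have sub_apply_eq : y - P y = ∑ i, (c i * (b i * y) - b i * y * c i) := by
    rw [Finset.sum_sub_distrib, ← hP.apply_eq_sum hg hc]
    simp only [← mul_assoc, ← Finset.sum_mul, sum_mul_eq_one, one_mul]
  rw [sub_apply_eq]
  exact Submodule.sum_mem _ fun i _ => mul_sub_mul_mem_commutatorSubmodule _ _

theorem ker_eq_commutatorSubmodule [Module.Free R A] [Module.Finite R A]
    [(leftTraceForm R A).IsPerfPair] (hP : IsCylinderOperator P) :
    LinearMap.ker P = commutatorSubmodule R A := by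
  refine le_antisymm (fun y hy => ?_) (hP.commutatorSubmodule_le_ker
    (LinearMap.IsPerfPair.bijective_left (leftTraceForm R A)).injective)
  simpa only [LinearMap.mem_ker.1 hy, sub_zero] using hP.sub_apply_mem_commutatorSubmodule y

end IsCylinderOperator

theorem stmt_6_general [Module.Free R A] [Module.Finite R A] [(leftTraceForm R A).IsPerfPair]
    {P : A →ₗ[R] A} (hP : IsCylinderOperator P) :
    P ∘ₗ P = P ∧
    LinearMap.range P = (Subalgebra.center R A).toSubmodule ∧
    LinearMap.ker P = commutatorSubmodule R A := by
  have hproj := hP.isProj_center (LinearMap.IsPerfPair.bijective_left _).injective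
  exact ⟨hproj.isIdempotentElem, hproj.range, hP.ker_eq_commutatorSubmodule⟩

end TraceForm

/-- If `P : V → V` is the linear map representing the pairing `γ(x,y) = tr(z ↦ x*z*y)`
with respect to the nondegenerate trace form `g(x,y) = tr(L_{x*y})`, i.e.
`g(x, P y) = γ(x, y)` for all `x, y`, then `P` is a projector with range the center
`Z(V)` and kernel the commutator subspace `[V,V]`. -/
theorem stmt_6 (k V : Type*) [Field k] [CharZero k] [Ring V] [Algebra k V]
    [FiniteDimensional k V]
    (hnondeg : ∀ x : V,
      (∀ y : V, LinearMap.trace k V (LinearMap.mulLeft k (x * y)) = 0) → x = 0)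
    (P : V →ₗ[k] V)
    (hP : ∀ x y : V,
      LinearMap.trace k V (LinearMap.mulLeft k (x * P y)) =
        LinearMap.trace k V (LinearMap.mulLeft k x ∘ₗ LinearMap.mulRight k y)) :
    P ∘ₗ P = P ∧
    LinearMap.range P = (Subalgebra.center k V).toSubmodule ∧
    LinearMap.ker P = Submodule.span k {c : V | ∃ a b : V, c = a * b - b * a} := by
  have := isPerfPair_leftTraceForm_of_separatingLeft hnondeg
  exact stmt_6_general hP
end
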